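/- Under the corruption-size estimation setting: let n > 0, let γ ∈ (1/2, 1], let τ* = γn be the true number of uncorrupted samples and τ > τ* the estimated threshold with τ' = τ − ⌈n/2⌉ ≥ (2γ−1)n/2 ... Suppose S_t and S_* are subsets of {1,...,n} with |S_t \ S_*| ≤ (1−γ)n, and suppose every residual r_i for i ∈ S_t satisfies r_i² ≤ (64/τ')·∑_{j ∈ S_* ∩ S_t} r_j². Then ∑_{i ∈ S_t} r_i² ≤ (1 + 128(1−γ)/(2γ−1)) · ∑_{i ∈ S_*} r_i². -/

import Mathlib

theorem estimated_set_objective_bound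
    (n : ℕ) (hn : 0 < n) (γ : ℝ) (hγ : 1 / 2 < γ ∧ γ ≤ 1)
    (r : Fin n → ℝ) (hr : ∀ i, 0 ≤ r i)
    (St Sstar : Finset (Fin n))
    (τ' : ℝ) (hτ' : (2 * γ - 1) * (n : ℝ) / 2 ≤ τ')
    (hdiff : ((St \ Sstar).card : ℝ) ≤ (1 - γ) * (n : ℝ))
    (hres : ∀ i ∈ St, (r i) ^ 2 ≤ (64 / τ') * ∑ j ∈ Sstar ∩ St, (r j) ^ 2)
    (hsub : ∑ j ∈ Sstar ∩ St, (r j) ^ 2 ≤ ∑ j ∈ Sstar, (r j) ^ 2) :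
    ∑ i ∈ St, (r i) ^ 2 ≤
      (1 + 128 * (1 - γ) / (2 * γ - 1)) * ∑ i ∈ Sstar, (r i) ^ 2 := by
  obtain ⟨h1, h2⟩ := hγ
  have hn' : (0 : ℝ) < n := by exact_mod_cast hn
  have hg : 0 < 2 * γ - 1 := by linarith
  have hlow : 0 < (2 * γ - 1) * (n : ℝ) / 2 := by positivity
  have hτ : 0 < τ' := lt_of_lt_of_le hlow hτ'
  have hA : 0 ≤ ∑ j ∈ Sstar ∩ St, (r j) ^ 2 := Finset.sum_nonneg fun i _ => sq_nonneg _
  have hsplit : ∑ i ∈ St, (r i) ^ 2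
      = ∑ j ∈ Sstar ∩ St, (r j) ^ 2 + ∑ i ∈ St \ Sstar, (r i) ^ 2 := by
    rw [Finset.inter_comm]
    exact (Finset.sum_inter_add_sum_sdiff St Sstar _).symm
  have hd : ∑ i ∈ St \ Sstar, (r i) ^ 2
      ≤ ((St \ Sstar).card : ℝ) * ((64 / τ') * ∑ j ∈ Sstar ∩ St, (r j) ^ 2) := by
    rw [← nsmul_eq_mul]
    exact Finset.sum_le_card_nsmul _ _ _ fun i hi => hres i (Finset.mem_sdiff.mp hi).1
  set A := ∑ j ∈ Sstar ∩ St, (r j) ^ 2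
  have hγ0 : 0 ≤ 1 - γ := by linarith
  have hc : ((St \ Sstar).card : ℝ) * (64 / τ') ≤ 128 * (1 - γ) / (2 * γ - 1) := by
    calc ((St \ Sstar).card : ℝ) * (64 / τ')
        ≤ ((1 - γ) * n) * (64 / ((2 * γ - 1) * (n : ℝ) / 2)) := by gcongr
      _ = 128 * (1 - γ) / (2 * γ - 1) := by
        field_simp
        ring
  have hK : 0 ≤ 128 * (1 - γ) / (2 * γ - 1) := by positivity
  calc ∑ i ∈ St, (r i) ^ 2 ≤ (1 + 128 * (1 - γ) / (2 * γ - 1)) * A := by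
        have := mul_le_mul_of_nonneg_right hc hA
        rw [hsplit]
        linarith
    _ ≤ _ := by gcongr
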